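/- Let (X,μ) and (Y,ν) be standard Borel spaces equipped with σ-finite Borel measures, and let E ⊆ X × Y be a set of finite width. Then the following are equivalent: (i) there is no nonzero compact operator T : L²(X,μ) → L²(Y,ν) supported on E; (ii) there is no nonzero Hilbert–Schmidt operator supported on E, i.e. no nonzero integral operator T_k f(y) = ∫_X k(y,x) f(x) dμ(x) with kernel k ∈ L²(Y × X, ν × μ) supported on E; (iii) (μ × ν)(E) = 0; (iv) there is no measurable rectangle α × β ⊆ E with μ(α) > 0 and ν(β) > 0. -/

import Mathlib

/-!
A measurable rectangle of positive measure inside `E` carries a rank one integral operator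
`f ↦ (∫_α f) 1_β`, so each of (i) and (ii) implies (iv) (`exists_rank_one`).

If `E` has no such rectangle it is null (`prod_eq_zero_of_no_rectangle`): write `{f ≤ g}` as the
union of the rectangles `{f ≤ q} × {q ≤ g}`, with `q` in the countable set of rationals and atoms
of `f`, and of a part of `{f = g}` that is null by Fubini. Then `E` is, up to a null set, a
countable union of rectangles contained in `E`.

If `E` is null and `T` is an integral operator supported on `E`, its kernel vanishes on each of
the countably many rectangles `{q < f i} × {g i < q}`, `q` rational, which cover the complement
of `E` (`kernel_ae_eq_zero`, `kernel_eq_zero`).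

The main point is that a compact `T` supported on a null `E` is zero
(`eq_zero_of_isCompactOperator`). For one inequality `f ≤ g`, compactness gives a finite partition
of the line into points and open, half-open or closed intervals `I` such that every compression
`P(g ∈ I) T` to a cell `I` that is not a point has norm at most `ε`
(`exists_partition_norm_proj_le`). Hence the block-diagonal part
`∑ P(g ∈ I) T P(f ∈ I)` over these cells has norm at most `ε` as well. Subtracting it leaves
a compact operator supported on finitely many rectangles contained in `{f ≤ g}`
(`exists_gridSet_approx`). Applying this successively to the inequalities defining `E` moves `T`
by at most `n ε` and ends with an operator supported on finitely many rectangles contained in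
`E`. They are null, so their union is marginally null (`IsGridSet.marginallyNull`) and
that last operator is zero.
-/

open MeasureTheory

/-- A subset of `X × Y` is marginally null if it is contained in
`(X₀ × Y) ∪ (X × Y₀)` with `μ X₀ = 0` and `ν Y₀ = 0`. -/
def MarginallyNull {X Y : Type*} [MeasurableSpace X] [MeasurableSpace Y]
    (μ : Measure X) (ν : Measure Y) (M : Set (X × Y)) : Prop :=
  ∃ (X₀ : Set X) (Y₀ : Set Y), MeasurableSet X₀ ∧ MeasurableSet Y₀ ∧
    μ X₀ = 0 ∧ ν Y₀ = 0 ∧ M ⊆ (X₀ ×ˢ (Set.univ : Set Y)) ∪ ((Set.univ : Set X) ×ˢ Y₀)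

/-- A bounded operator `T : L²(X,μ) → L²(Y,ν)` is supported on `E ⊆ X × Y` if
whenever `(α × β) ∩ E` is marginally null, `T f` vanishes a.e. on `β` for every `f`
vanishing a.e. off `α` (i.e. `P(β) ∘ T ∘ P(α) = 0`). -/
def SupportedOn {X Y : Type*} [MeasurableSpace X] [MeasurableSpace Y]
    (μ : Measure X) (ν : Measure Y) (T : Lp ℂ 2 μ →L[ℂ] Lp ℂ 2 ν)
    (E : Set (X × Y)) : Prop :=
  ∀ (α : Set X) (β : Set Y), MeasurableSet α → MeasurableSet β →
    MarginallyNull μ ν ((α ×ˢ β) ∩ E) →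
    ∀ f : Lp ℂ 2 μ, (∀ᵐ x ∂μ, x ∉ α → f x = 0) → ∀ᵐ y ∂ν, y ∈ β → T f y = 0

/-- `E ⊆ X × Y` is a set of finite width if
`E = {(x,y) : f i x ≤ g i y, i = 1, …, n}` for finitely many measurable
real-valued functions `f i`, `g i`. -/
def FiniteWidth {X Y : Type*} [MeasurableSpace X] [MeasurableSpace Y]
    (E : Set (X × Y)) : Prop :=
  ∃ (n : ℕ) (f : Fin n → X → ℝ) (g : Fin n → Y → ℝ),
    (∀ i, Measurable (f i)) ∧ (∀ i, Measurable (g i)) ∧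
    E = {p : X × Y | ∀ i, f i p.1 ≤ g i p.2}

/-! ### Partitions of the line -/

/-- A finite measure on the line admits a finite partition into order-convex cells `c ⁻¹' {k}`,
each of which is a single point (or empty) or has measure at most `ε`. The index `c t` is
`⌊ρ(-∞, t) / ε⌋ + ⌊ρ(-∞, t] / ε⌋`: the jump between the two summands puts large atoms in cells of
their own. -/
theorem exists_monotone_partition (ρ : Measure ℝ) [IsFiniteMeasure ρ] {ε : ℝ} (hε : 0 < ε) :
    ∃ (c : ℝ → ℕ) (N : ℕ), Monotone c ∧ (∀ t, c t ≤ N) ∧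
      ∀ k, (c ⁻¹' {k}).Subsingleton ∨ ρ (c ⁻¹' {k}) ≤ ENNReal.ofReal ε := by
  have hmono₁ : Monotone fun t => ⌊ρ.real (Set.Iio t) / ε⌋₊ := fun s t h =>
    Nat.floor_mono (div_le_div_of_nonneg_right
      (measureReal_mono (Set.Iio_subset_Iio h)) hε.le)
  have hmono₂ : Monotone fun t => ⌊ρ.real (Set.Iic t) / ε⌋₊ := fun s t h =>
    Nat.floor_mono (div_le_div_of_nonneg_right
      (measureReal_mono (Set.Iic_subset_Iic.2 h)) hε.le)
  set c : ℝ → ℕ := fun t => ⌊ρ.real (Set.Iio t) / ε⌋₊ + ⌊ρ.real (Set.Iic t) / ε⌋₊ with hc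
  have hcm : Monotone c := hmono₁.add hmono₂
  refine ⟨c, ⌊ρ.real Set.univ / ε⌋₊ + ⌊ρ.real Set.univ / ε⌋₊, hcm, fun t => ?_, fun k => ?_⟩
  · exact add_le_add
      (Nat.floor_mono (div_le_div_of_nonneg_right (measureReal_mono (Set.subset_univ _)) hε.le))
      (Nat.floor_mono (div_le_div_of_nonneg_right (measureReal_mono (Set.subset_univ _)) hε.le))
  by_cases hk : (c ⁻¹' {k}).Subsingleton
  · exact Or.inl hk
  refine Or.inr ?_
  -- On a cell with two points both floors are constant and equal, so the mass of
  -- every closed interval with end points in the cell is below `ε`.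
  have key : ∀ s t, c s = k → c t = k → s < t → ρ.real (Set.Icc s t) < ε := by
    intro s t hs ht hst
    have h1 := hmono₁ hst.le
    have h2 := hmono₂ hst.le
    have h3 : ⌊ρ.real (Set.Iic s) / ε⌋₊ ≤ ⌊ρ.real (Set.Iio t) / ε⌋₊ :=
      Nat.floor_mono (div_le_div_of_nonneg_right
        (measureReal_mono (Set.Iic_subset_Iio.2 hst)) hε.le)
    have h4 : ⌊ρ.real (Set.Iio s) / ε⌋₊ ≤ ⌊ρ.real (Set.Iic s) / ε⌋₊ :=
      Nat.floor_mono (div_le_div_of_nonneg_right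
        (measureReal_mono Set.Iio_subset_Iic_self) hε.le)
    have h5 : ⌊ρ.real (Set.Iio s) / ε⌋₊ = ⌊ρ.real (Set.Iic t) / ε⌋₊ := by
      simp only [hc] at hs ht h1 h2
      omega
    have h6 : ρ.real (Set.Iic t) / ε < ⌊ρ.real (Set.Iic t) / ε⌋₊ + 1 := Nat.lt_floor_add_one _
    have h7 : (⌊ρ.real (Set.Iio s) / ε⌋₊ : ℝ) ≤ ρ.real (Set.Iio s) / ε :=
      Nat.floor_le (by positivity)
    have h8 : ρ.real (Set.Iic t) / ε < ρ.real (Set.Iio s) / ε + 1 := by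
      rw [← h5] at h6; linarith
    have h9 : ρ.real (Set.Iic t) = ρ.real (Set.Iio s) + ρ.real (Set.Icc s t) := by
      rw [← measureReal_union _ measurableSet_Icc, Set.Iio_union_Icc_eq_Iic hst.le]
      exact Set.disjoint_left.2 fun x hx hx' => absurd hx'.1 (not_le.2 hx)
    rw [h9, add_div] at h8
    have : ρ.real (Set.Icc s t) / ε < 1 := by linarith
    rwa [div_lt_one hε] at this
  rw [(hcm.measurable (measurableSet_singleton k)).measure_eq_iSup_isCompact_of_ne_top
    (measure_ne_top _ _)]
  refine iSup_le fun K => iSup_le fun hK => iSup_le fun hKc => ?_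
  rcases K.eq_empty_or_nonempty with rfl | hne
  · simp
  obtain ⟨s, t, hs, ht, hst⟩ : ∃ s t, c s = k ∧ c t = k ∧ s < t ∧ K ⊆ Set.Icc s t := by
    rw [Set.not_subsingleton_iff] at hk
    obtain ⟨p, hp, q, hq, hpq⟩ := hk.exists_lt
    refine ⟨min p (sInf K), max q (sSup K), ?_, ?_, ?_, fun x hx => ⟨?_, ?_⟩⟩
    · rcases min_choice p (sInf K) with h | h <;> rw [h]
      · exact hp
      · exact hK (hKc.sInf_mem hne)
    · rcases max_choice q (sSup K) with h | h <;> rw [h]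
      · exact hq
      · exact hK (hKc.sSup_mem hne)
    · exact (min_le_left _ _).trans_lt (hpq.trans_le (le_max_left _ _))
    · exact (min_le_right _ _).trans (csInf_le hKc.bddBelow hx)
    · exact (le_csSup hKc.bddAbove hx).trans (le_max_right _ _)
  refine (measure_mono hst.2).trans ?_
  rw [← ofReal_measureReal]
  exact ENNReal.ofReal_le_ofReal (key s t hs ht hst.1).le

/-! ### Multiplication by indicator functions -/

section Projection

variable {X : Type*} [MeasurableSpace X] (μ : Measure X)

/-- The projection `P(A)` on `L²(μ)`: multiplication by the indicator function of `A`. -/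
noncomputable def proj {A : Set X} (hA : MeasurableSet A) : Lp ℂ 2 μ →L[ℂ] Lp ℂ 2 μ :=
  LinearMap.mkContinuous
    { toFun := fun f => ((Lp.memLp f).indicator hA).toLp
      map_add' := fun f g => by
        rw [← MemLp.toLp_add, MemLp.toLp_eq_toLp_iff, ← Set.indicator_add']
        filter_upwards [Lp.coeFn_add f g] with x hx
        by_cases h : x ∈ A
        · rw [Set.indicator_of_mem h, Set.indicator_of_mem h, hx]
        · simp [h]
      map_smul' := fun r f => by
        rw [RingHom.id_apply, ← MemLp.toLp_const_smul, MemLp.toLp_eq_toLp_iff]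
        filter_upwards [Lp.coeFn_smul r f] with x hx
        by_cases h : x ∈ A
        · rw [Set.indicator_of_mem h, hx, Pi.smul_apply, Pi.smul_apply, Set.indicator_of_mem h]
        · simp [h] }
    1 fun f => by
      rw [one_mul]
      refine Lp.norm_le_norm_of_ae_le ?_
      filter_upwards [((Lp.memLp f).indicator hA).coeFn_toLp] with x hx
      simp only [LinearMap.coe_mk, AddHom.coe_mk, hx]
      exact norm_indicator_le_norm_self _ _

variable {μ}

theorem proj_coeFn {A : Set X} (hA : MeasurableSet A) (f : Lp ℂ 2 μ) :
    ⇑(proj μ hA f) =ᵐ[μ] A.indicator f :=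
  ((Lp.memLp f).indicator hA).coeFn_toLp

theorem norm_proj_apply_le {A : Set X} (hA : MeasurableSet A) (f : Lp ℂ 2 μ) :
    ‖proj μ hA f‖ ≤ ‖f‖ := by
  refine Lp.norm_le_norm_of_ae_le ?_
  filter_upwards [proj_coeFn hA f] with x hx
  rw [hx]
  exact norm_indicator_le_norm_self _ _

theorem enorm_proj_sq {A : Set X} (hA : MeasurableSet A) (f : Lp ℂ 2 μ) :
    ‖proj μ hA f‖ₑ ^ 2 = ∫⁻ x in A, ‖f x‖ₑ ^ 2 ∂μ := by
  rw [Lp.enorm_def, eLpNorm_congr_ae (proj_coeFn hA f),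
    eLpNorm_indicator_eq_eLpNorm_restrict hA]
  simpa using eLpNorm_nnreal_pow_eq_lintegral (μ := μ.restrict A) (f := f) (p := 2) (by norm_num)

theorem inner_proj_eq_zero {A B : Set X} (hA : MeasurableSet A) (hB : MeasurableSet B)
    (hAB : Disjoint A B) (f g : Lp ℂ 2 μ) : inner ℂ (proj μ hA f) (proj μ hB g) = 0 := by
  rw [L2.inner_def]
  refine integral_eq_zero_of_ae ?_
  filter_upwards [proj_coeFn hA f, proj_coeFn hB g] with x h1 h2
  rw [h1, h2]
  by_cases h : x ∈ A
  · simp [Set.disjoint_left.1 hAB h]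
  · simp [h]

/-- Pythagoras' theorem for functions carried by disjoint sets. -/
theorem norm_sum_proj_sq {ι : Type*} (s : Finset ι) {A : ι → Set X}
    (hA : ∀ i, MeasurableSet (A i)) (hd : Pairwise fun i j => Disjoint (A i) (A j))
    (f : ι → Lp ℂ 2 μ) :
    ‖∑ i ∈ s, proj μ (hA i) (f i)‖ ^ 2 = ∑ i ∈ s, ‖proj μ (hA i) (f i)‖ ^ 2 := by
  classical
  induction s using Finset.induction_on with
  | empty => simp
  | insert a s ha ih =>
    rw [Finset.sum_insert ha, Finset.sum_insert ha, ← ih]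
    have h0 : inner ℂ (proj μ (hA a) (f a)) (∑ i ∈ s, proj μ (hA i) (f i)) = 0 := by
      rw [inner_sum]
      refine Finset.sum_eq_zero fun i hi => inner_proj_eq_zero _ _ (hd ?_) _ _
      rintro rfl
      exact ha hi
    have := norm_add_sq_eq_norm_sq_add_norm_sq_of_inner_eq_zero _ _ h0
    simpa [sq] using this

/-- Bessel's inequality for the projections onto disjoint sets. -/
theorem sum_norm_proj_sq_le {ι : Type*} (s : Finset ι) {A : ι → Set X}
    (hA : ∀ i, MeasurableSet (A i)) (hd : Pairwise fun i j => Disjoint (A i) (A j))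
    (f : Lp ℂ 2 μ) : ∑ i ∈ s, ‖proj μ (hA i) f‖ ^ 2 ≤ ‖f‖ ^ 2 := by
  rw [← norm_sum_proj_sq s hA hd fun _ => f]
  have : ‖∑ i ∈ s, proj μ (hA i) f‖ ≤ ‖f‖ := by
    refine Lp.norm_le_norm_of_ae_le ?_
    have h1 : ∀ᵐ x ∂μ, ∀ i ∈ s, proj μ (hA i) f x = (A i).indicator f x :=
      (ae_ball_iff s.countable_toSet).2 fun i _ => proj_coeFn (hA i) f
    filter_upwards [h1, Lp.coeFn_finsetSum s fun i => proj μ (hA i) f] with x h1 h2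
    rw [h2, Finset.sum_apply, Finset.sum_congr rfl h1]
    by_cases h : ∃ i ∈ s, x ∈ A i
    · obtain ⟨i, hi, hx⟩ := h
      rw [Finset.sum_eq_single_of_mem i hi, Set.indicator_of_mem hx]
      exact fun j _ hj => Set.indicator_of_notMem (Set.disjoint_right.1 (hd hj) hx) _
    · push Not at h
      rw [Finset.sum_eq_zero fun i hi => Set.indicator_of_notMem (h i hi) _]
      simp
  gcongr

end Projection

/-! ### Removing the diagonal blocks of a compact operator -/

theorem disjoint_fibres {Z : Type*} (a : Z → ℕ) :
    Pairwise fun i j => Disjoint (a ⁻¹' {i}) (a ⁻¹' {j}) :=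
  fun _ _ hij => Disjoint.preimage a (by simpa using hij)

theorem measure_null_fibres {Z : Type*} [MeasurableSpace Z] (ρ : Measure Z) (a : Z → ℕ) :
    ρ (a ⁻¹' {m | ρ (a ⁻¹' {m}) = 0}) = 0 := by
  rw [← Set.biUnion_preimage_singleton]
  exact (measure_biUnion_null_iff (Set.to_countable _)).2 fun m hm => hm

section Truncation

variable {X Y : Type*} [MeasurableSpace X] [MeasurableSpace Y] {μ : Measure X} {ν : Measure Y}

/-- The block-diagonal part of `T` over the blocks `A i × B i`, `i ∈ s`. -/
noncomputable def blockDiag {ι : Type*} (T : Lp ℂ 2 μ →L[ℂ] Lp ℂ 2 ν) (s : Finset ι)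
    {A : ι → Set X} {B : ι → Set Y} (hA : ∀ i, MeasurableSet (A i))
    (hB : ∀ i, MeasurableSet (B i)) : Lp ℂ 2 μ →L[ℂ] Lp ℂ 2 ν :=
  ∑ i ∈ s, proj ν (hB i) ∘L T ∘L proj μ (hA i)

theorem blockDiag_apply {ι : Type*} (T : Lp ℂ 2 μ →L[ℂ] Lp ℂ 2 ν) (s : Finset ι)
    {A : ι → Set X} {B : ι → Set Y} (hA : ∀ i, MeasurableSet (A i))
    (hB : ∀ i, MeasurableSet (B i)) (f : Lp ℂ 2 μ) :
    blockDiag T s hA hB f = ∑ i ∈ s, proj ν (hB i) (T (proj μ (hA i) f)) := by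
  simp [blockDiag]

theorem isCompactOperator_blockDiag {ι : Type*} {T : Lp ℂ 2 μ →L[ℂ] Lp ℂ 2 ν}
    (hT : IsCompactOperator T) (s : Finset ι)
    {A : ι → Set X} {B : ι → Set Y} (hA : ∀ i, MeasurableSet (A i))
    (hB : ∀ i, MeasurableSet (B i)) : IsCompactOperator (blockDiag T s hA hB) := by
  classical
  unfold blockDiag
  induction s using Finset.induction_on with
  | empty => simpa using isCompactOperator_zero
  | insert i s hi ih =>
    rw [Finset.sum_insert hi]
    exact ((hT.comp_clm (proj μ (hA i))).clm_comp (proj ν (hB i))).add ih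

/-- Since the blocks `A i × B i` have disjoint rows and disjoint columns, the norm of the
block-diagonal part is controlled by the largest block. -/
theorem norm_blockDiag_le {ι : Type*} {T : Lp ℂ 2 μ →L[ℂ] Lp ℂ 2 ν} (s : Finset ι)
    {A : ι → Set X} {B : ι → Set Y} (hA : ∀ i, MeasurableSet (A i))
    (hB : ∀ i, MeasurableSet (B i)) (hAd : Pairwise fun i j => Disjoint (A i) (A j))
    (hBd : Pairwise fun i j => Disjoint (B i) (B j)) {δ : ℝ} (hδ : 0 ≤ δ)
    (h : ∀ i ∈ s, ∀ u, ‖proj ν (hB i) (T u)‖ ≤ δ * ‖u‖) : ‖blockDiag T s hA hB‖ ≤ δ := by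
  refine ContinuousLinearMap.opNorm_le_bound _ hδ fun f => ?_
  rw [blockDiag_apply]
  refine abs_le_of_sq_le_sq' ?_ (by positivity) |>.2
  rw [norm_sum_proj_sq s hB hBd]
  calc ∑ i ∈ s, ‖proj ν (hB i) (T (proj μ (hA i) f))‖ ^ 2
      ≤ ∑ i ∈ s, δ ^ 2 * ‖proj μ (hA i) f‖ ^ 2 := by
        refine Finset.sum_le_sum fun i hi => ?_
        rw [← mul_pow]
        gcongr
        exact h i hi _
    _ = δ ^ 2 * ∑ i ∈ s, ‖proj μ (hA i) f‖ ^ 2 := by rw [Finset.mul_sum]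
    _ ≤ δ ^ 2 * ‖f‖ ^ 2 := by gcongr; exact sum_norm_proj_sq_le s hA hAd f
    _ = (δ * ‖f‖) ^ 2 := by ring

/-- For compact `T`, all the compressions `P(g ∈ I) T` to the cells `I` of a suitable finite
partition of the line are small, except for cells that are single points. A finite net of
the image of the unit ball reduces this to partitioning a finite measure on the line. -/
theorem exists_partition_norm_proj_le {T : Lp ℂ 2 μ →L[ℂ] Lp ℂ 2 ν} (hT : IsCompactOperator T)
    {g : Y → ℝ} (hg : Measurable g) {ε : ℝ} (hε : 0 < ε) :
    ∃ (c : ℝ → ℕ) (N : ℕ) (hc : Monotone c), (∀ t, c t ≤ N) ∧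
      ∀ k, (c ⁻¹' {k}).Subsingleton ∨ ∀ u,
        ‖proj ν ((hc.measurable.comp hg) (measurableSet_singleton k)) (T u)‖ ≤ ε * ‖u‖ := by
  have hTB : TotallyBounded (T '' Metric.closedBall 0 1) := by
    exact (IsCompactOperator.isCompact_closure_image_closedBall
      (f := T.toLinearMap) hT 1).totallyBounded.subset subset_closure
  obtain ⟨t, ht, htT⟩ := Metric.totallyBounded_iff.1 hTB (ε / 2) (by positivity)
  lift t to Finset (Lp ℂ 2 ν) using ht
  -- the finite measure to be partitioned is the image under `g` of `(∑ v ∈ t, |v|²) ν`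
  set w : Y → ENNReal := fun y => ∑ v ∈ t, ‖v y‖ₑ ^ 2 with hw
  have hvm : ∀ v : Lp ℂ 2 ν, Measurable fun y => ‖v y‖ₑ ^ 2 := fun v =>
    (Lp.stronglyMeasurable v).measurable.enorm.pow_const 2
  have hfin : ∀ v : Lp ℂ 2 ν, ∫⁻ y, ‖v y‖ₑ ^ 2 ∂ν ≠ ⊤ := fun v => by
    have := enorm_proj_sq MeasurableSet.univ v
    rw [Measure.restrict_univ] at this
    rw [← this]
    exact ENNReal.pow_ne_top enorm_ne_top
  have hwfin : IsFiniteMeasure (ν.withDensity w) := by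
    refine isFiniteMeasure_withDensity ?_
    rw [hw, lintegral_finsetSum _ fun v _ => hvm v]
    exact ENNReal.sum_ne_top.2 fun v _ => hfin v
  obtain ⟨c, N, hc, hN, hcell⟩ := exists_monotone_partition
    ((ν.withDensity w).map g) (ε := (ε / 2) ^ 2) (by positivity)
  refine ⟨c, N, hc, hN, fun k => (hcell k).imp_right fun hk => ?_⟩
  set hB := (hc.measurable.comp hg) (measurableSet_singleton k)
  have hv : ∀ v ∈ t, ‖proj ν hB v‖ ≤ ε / 2 := by
    intro v hv
    rw [Measure.map_apply hg (hc.measurable (measurableSet_singleton k)),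
      withDensity_apply _ (hg (hc.measurable (measurableSet_singleton k)))] at hk
    have h1 : ‖proj ν hB v‖ₑ ^ 2 ≤ ENNReal.ofReal (ε / 2) ^ 2 := by
      rw [enorm_proj_sq, ← ENNReal.ofReal_pow (by positivity)]
      refine le_trans (lintegral_mono fun y => ?_) hk
      exact Finset.single_le_sum (f := fun v : Lp ℂ 2 ν => ‖v y‖ₑ ^ 2) (fun _ _ => zero_le) hv
    have h2 := (ENNReal.pow_le_pow_left_iff two_ne_zero).1 h1
    rwa [← ofReal_norm, ENNReal.ofReal_le_ofReal_iff (by positivity)] at h2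
  have hunit : ∀ u : Lp ℂ 2 μ, u ∈ Metric.closedBall 0 1 → ‖proj ν hB (T u)‖ ≤ ε := by
    intro u hu
    obtain ⟨v, hvt, huv⟩ := Set.mem_iUnion₂.1 (htT (Set.mem_image_of_mem T hu))
    have h1 : proj ν hB (T u) = proj ν hB (T u - v) + proj ν hB v := by simp
    rw [h1]
    refine (norm_add_le _ _).trans ?_
    have h2 := norm_proj_apply_le hB (T u - v)
    have h3 : ‖T u - v‖ < ε / 2 := by simpa [dist_eq_norm] using huv
    linarith [hv v hvt]
  intro u
  rcases eq_or_ne u 0 with rfl | hu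
  · simp
  have hu' : 0 < ‖u‖ := norm_pos_iff.2 hu
  have h1 := hunit (((‖u‖⁻¹ : ℝ) : ℂ) • u) (by simp [norm_smul, hu'.ne'])
  rw [map_smul, map_smul, norm_smul] at h1
  simp only [Complex.norm_real, norm_inv, norm_norm] at h1
  rw [inv_mul_le_iff₀ hu'] at h1
  linarith

/-- `A` is a union of blocks `{a = i} × {b = j}` of a countable measurable grid in `X × Y`, the
rows and columns of which are encoded by measurable functions `a` and `b` into `ℕ`. -/
def IsGridSet (A : Set (X × Y)) : Prop :=
  ∃ (a : X → ℕ) (b : Y → ℕ) (S : Set (ℕ × ℕ)), Measurable a ∧ Measurable b ∧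
    A = {p | (a p.1, b p.2) ∈ S}

theorem IsGridSet.inter {A B : Set (X × Y)} (hA : IsGridSet A) (hB : IsGridSet B) :
    IsGridSet (A ∩ B) := by
  obtain ⟨a, b, S, ha, hb, rfl⟩ := hA
  obtain ⟨a', b', S', ha', hb', rfl⟩ := hB
  refine ⟨fun x => Nat.pair (a x) (a' x), fun y => Nat.pair (b y) (b' y),
    {q | (q.1.unpair.1, q.2.unpair.1) ∈ S ∧ (q.1.unpair.2, q.2.unpair.2) ∈ S'},
    (measurable_of_countable fun q : ℕ × ℕ => Nat.pair q.1 q.2).comp (ha.prodMk ha'),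
    (measurable_of_countable fun q : ℕ × ℕ => Nat.pair q.1 q.2).comp (hb.prodMk hb'), ?_⟩
  ext p
  simp

/-- A null union of grid blocks is marginally null: the null rows and the null columns of the
grid cover it. -/
theorem IsGridSet.marginallyNull [SFinite μ] [SFinite ν] {A : Set (X × Y)} (hA : IsGridSet A)
    (h0 : μ.prod ν A = 0) : MarginallyNull μ ν A := by
  obtain ⟨a, b, S, ha, hb, rfl⟩ := hA
  refine ⟨_, _, ha (Set.to_countable _).measurableSet, hb (Set.to_countable _).measurableSet,
    measure_null_fibres μ a, measure_null_fibres ν b, ?_⟩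
  rintro ⟨x, y⟩ hxy
  have h1 : μ (a ⁻¹' {a x}) * ν (b ⁻¹' {b y}) = 0 := by
    rw [← Measure.prod_prod]
    refine measure_mono_null ?_ h0
    rintro ⟨x', y'⟩ ⟨hx', hy'⟩
    simp only [Set.mem_preimage, Set.mem_singleton_iff] at hx' hy'
    simpa [hx', hy'] using hxy
  rcases mul_eq_zero.1 h1 with h | h
  · exact Or.inl ⟨h, trivial⟩
  · exact Or.inr ⟨trivial, h⟩

/-- If `T` is supported on a set where `a ≤ b`, removing from `T` the diagonal blocks
`{a = k} × {b = k}`, `k ∈ s`, confines the support to the blocks with `a < b`, or `a = b ∉ s`.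
On `{b = k}` with `k ∈ s`, the new operator acts as `T` on functions vanishing on `{a = k}`;
on `{b ∉ s}` it agrees with `T`. -/
theorem supportedOn_sub_blockDiag {T : Lp ℂ 2 μ →L[ℂ] Lp ℂ 2 ν} {E : Set (X × Y)}
    (hT : SupportedOn μ ν T E) {a : X → ℕ} {b : Y → ℕ} (ha : Measurable a) (hb : Measurable b)
    (hE : ∀ p ∈ E, a p.1 ≤ b p.2) (s : Finset ℕ) :
    SupportedOn μ ν
      (T - blockDiag T s (fun k => ha (measurableSet_singleton k))
        (fun k => hb (measurableSet_singleton k)))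
      (E ∩ {p | (a p.1, b p.2) ∈ {q : ℕ × ℕ | q.1 < q.2 ∨ q.1 = q.2 ∧ q.2 ∉ s}}) := by
  intro α β hα hβ hnull f hf
  set hA := fun k => ha (measurableSet_singleton k)
  set hB := fun k => hb (measurableSet_singleton k)
  obtain ⟨X₀, Y₀, hX₀, hY₀, hX₀0, hY₀0, hsub⟩ := hnull
  have hD : ∀ᵐ y ∂ν, ∀ k ∈ s, proj ν (hB k) (T (proj μ (hA k) f)) y =
      (b ⁻¹' {k}).indicator (T (proj μ (hA k) f)) y :=
    (ae_ball_iff s.countable_toSet).2 fun k _ => proj_coeFn (hB k) _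
  have hsum : ∀ᵐ y ∂ν, blockDiag T s hA hB f y =
      ∑ k ∈ s, (b ⁻¹' {k}).indicator (T (proj μ (hA k) f)) y := by
    rw [blockDiag_apply]
    filter_upwards [hD, Lp.coeFn_finsetSum s fun k => proj ν (hB k) (T (proj μ (hA k) f))]
      with y h1 h2
    rw [h2, Finset.sum_apply, Finset.sum_congr rfl h1]
  have hdiag : ∀ᵐ y ∂ν, ∀ k ∈ s, y ∈ β ∩ b ⁻¹' {k} → T (f - proj μ (hA k) f) y = 0 := by
    refine (ae_ball_iff s.countable_toSet).2 fun k hk =>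
      hT (α ∩ (a ⁻¹' {k})ᶜ) _ (hα.inter (hA k).compl) (hβ.inter (hB k))
        ⟨X₀, Y₀, hX₀, hY₀, hX₀0, hY₀0, ?_⟩ _ ?_
    · rintro ⟨x, y⟩ ⟨⟨⟨hx, hxk⟩, hy, hyk⟩, hxy⟩
      refine hsub ⟨⟨hx, hy⟩, hxy, Or.inl (lt_of_le_of_ne (hE _ hxy) fun h => hxk ?_)⟩
      exact h.trans hyk
    · filter_upwards [hf, proj_coeFn (hA k) f, Lp.coeFn_sub f (proj μ (hA k) f)] with x h1 h2 h3 hx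
      rw [h3, Pi.sub_apply, h2]
      by_cases hxk : x ∈ a ⁻¹' {k}
      · simp [Set.indicator_of_mem hxk]
      · rw [Set.indicator_of_notMem hxk, h1 fun hxα => hx ⟨hxα, hxk⟩, sub_zero]
  have hoff : ∀ᵐ y ∂ν, y ∈ β ∩ b ⁻¹' (↑s)ᶜ → T f y = 0 := by
    refine hT α _ hα (hβ.inter (hb (Set.to_countable _).measurableSet))
        ⟨X₀, Y₀, hX₀, hY₀, hX₀0, hY₀0, ?_⟩ f hf
    rintro ⟨x, y⟩ ⟨⟨hx, hy, hyk⟩, hxy⟩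
    refine hsub ⟨⟨hx, hy⟩, hxy, (hE _ hxy).lt_or_eq.imp_right fun h => ⟨h, ?_⟩⟩
    simpa using hyk
  have hsubT : ∀ᵐ y ∂ν, ∀ k ∈ s,
      T (f - proj μ (hA k) f) y = T f y - T (proj μ (hA k) f) y := by
    refine (ae_ball_iff s.countable_toSet).2 fun k _ => ?_
    rw [map_sub]
    exact Lp.coeFn_sub _ _
  filter_upwards [hsum, hdiag, hoff, hsubT, Lp.coeFn_sub (T f) (blockDiag T s hA hB f)]
    with y h1 h2 h3 h4 h5 hy
  rw [sub_apply, h5, Pi.sub_apply, h1]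
  by_cases hys : b y ∈ s
  · rw [Finset.sum_eq_single_of_mem _ hys, Set.indicator_of_mem (by rfl), ← h4 _ hys]
    · exact h2 _ hys ⟨hy, rfl⟩
    · intro k _ hk
      exact Set.indicator_of_notMem (show y ∉ b ⁻¹' {k} from fun h => hk (Eq.symm h)) _
  · rw [Finset.sum_eq_zero, sub_zero]
    · exact h3 ⟨hy, by simpa using hys⟩
    · intro k hk
      refine Set.indicator_of_notMem (show y ∉ b ⁻¹' {k} from fun h => hys ?_) _
      rwa [show b y = k from h]

/-- A compact operator supported inside `{f ≤ g}` is, up to `ε` in norm, supported on a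
grid set inside `{f ≤ g}`. -/
theorem exists_gridSet_approx {T : Lp ℂ 2 μ →L[ℂ] Lp ℂ 2 ν} (hT : IsCompactOperator T)
    {E : Set (X × Y)} (hTE : SupportedOn μ ν T E) {f : X → ℝ} {g : Y → ℝ} (hf : Measurable f)
    (hg : Measurable g) (hE : ∀ p ∈ E, f p.1 ≤ g p.2) {ε : ℝ} (hε : 0 < ε) :
    ∃ (T' : Lp ℂ 2 μ →L[ℂ] Lp ℂ 2 ν) (R : Set (X × Y)), IsCompactOperator T' ∧
      ‖T - T'‖ ≤ ε ∧ IsGridSet R ∧ (∀ p ∈ R, f p.1 ≤ g p.2) ∧ SupportedOn μ ν T' (E ∩ R) := by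
  classical
  -- A block `{c ∘ f = i} × {c ∘ g = j}` lies in `{f ≤ g}` when `i < j`, and also when `i = j`
  -- indexes a one-point cell; the remaining blocks meeting `E` are diagonal and have small norm.
  obtain ⟨c, N, hc, hN, hcell⟩ := exists_partition_norm_proj_le hT hg hε
  have ha : Measurable (c ∘ f) := hc.measurable.comp hf
  have hb : Measurable (c ∘ g) := hc.measurable.comp hg
  set s : Finset ℕ := {k ∈ Finset.range (N + 1) | ¬ (c ⁻¹' {k}).Subsingleton}
  refine ⟨_, _, hT.sub (isCompactOperator_blockDiag hT s
      (fun k => ha (measurableSet_singleton k)) (fun k => hb (measurableSet_singleton k))), ?_,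
    ⟨c ∘ f, c ∘ g, {q : ℕ × ℕ | q.1 < q.2 ∨ q.1 = q.2 ∧ q.2 ∉ s}, ha, hb, rfl⟩, ?_,
    supportedOn_sub_blockDiag hTE ha hb (fun p hp => hc (hE p hp)) s⟩
  · rw [sub_sub_cancel]
    refine norm_blockDiag_le s _ _ (disjoint_fibres _) (disjoint_fibres _) hε.le fun k hk => ?_
    exact (hcell k).resolve_left (Finset.mem_filter.1 hk).2
  · rintro ⟨x, y⟩ (h | ⟨h, hs⟩)
    · exact (hc.reflect_lt h).le
    · have hsing : (c ⁻¹' {c (g y)}).Subsingleton := by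
        by_contra hcon
        exact hs (Finset.mem_filter.2 ⟨Finset.mem_range.2 (Nat.lt_succ_of_le (hN _)), hcon⟩)
      exact (hsing h rfl).le

end Truncation

/-! ### The implications -/

section Main

variable {X Y : Type*} [MeasurableSpace X] [MeasurableSpace Y] {μ : Measure X} {ν : Measure Y}

/-- A compact operator supported on a null set of finite width vanishes: treating the finitely
many inequalities `f i ≤ g i` one after the other approximates it in norm by operators supported
on null grid sets, and these operators are zero. -/
theorem eq_zero_of_isCompactOperator [SFinite μ] [SFinite ν] {E : Set (X × Y)}
    (hE : FiniteWidth E) (h0 : μ.prod ν E = 0) {T : Lp ℂ 2 μ →L[ℂ] Lp ℂ 2 ν}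
    (hT : IsCompactOperator T) (hTE : SupportedOn μ ν T E) : T = 0 := by
  classical
  obtain ⟨n, f, g, hf, hg, rfl⟩ := hE
  set E : Set (X × Y) := {p | ∀ i, f i p.1 ≤ g i p.2}
  have approx : ∀ ε : ℝ, 0 < ε → ∀ t : Finset (Fin n),
      ∃ (T' : Lp ℂ 2 μ →L[ℂ] Lp ℂ 2 ν) (A : Set (X × Y)), IsCompactOperator T' ∧
        ‖T - T'‖ ≤ t.card * ε ∧ IsGridSet A ∧ (∀ p ∈ A, ∀ i ∈ t, f i p.1 ≤ g i p.2) ∧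
        SupportedOn μ ν T' (E ∩ A) := by
    intro ε hε t
    induction t using Finset.induction_on with
    | empty =>
      refine ⟨T, Set.univ, hT, by simp, ⟨fun _ => 0, fun _ => 0, Set.univ, measurable_const,
        measurable_const, by simp⟩, by simp, by simpa using hTE⟩
    | insert i t hi ih =>
      obtain ⟨T₁, A, hT₁, hn₁, hA, hAt, hs₁⟩ := ih
      obtain ⟨T₂, R, hT₂, hn₂, hR, hRi, hs₂⟩ :=
        exists_gridSet_approx hT₁ hs₁ (hf i) (hg i) (fun p hp => hp.1 i) hε
      refine ⟨T₂, A ∩ R, hT₂, ?_, hA.inter hR, fun p hp j hj => ?_, ?_⟩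
      · rw [Finset.card_insert_of_notMem hi]
        have := norm_add_le (T - T₁) (T₁ - T₂)
        rw [sub_add_sub_cancel] at this
        push_cast
        linarith
      · rcases Finset.mem_insert.1 hj with rfl | hj
        · exact hRi p hp.2
        · exact hAt p hp.1 j hj
      · rwa [← Set.inter_assoc]
  have hle : ∀ ε : ℝ, 0 < ε → ‖T‖ ≤ n * ε := by
    intro ε hε
    obtain ⟨T', A, -, hn, hA, hAt, hs⟩ := approx ε hε Finset.univ
    have hAE : A ⊆ E := fun p hp i => hAt p hp i (Finset.mem_univ i)
    obtain ⟨X₀, Y₀, h1, h2, h3, h4, h5⟩ := hA.marginallyNull (measure_mono_null hAE h0)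
    have hT' : T' = 0 := by
      ext1 u
      refine Lp.ext ?_
      filter_upwards [hs Set.univ Set.univ .univ .univ
        ⟨X₀, Y₀, h1, h2, h3, h4, fun p hp => h5 hp.2.2⟩ u (by simp), Lp.coeFn_zero ℂ 2 ν]
        with y hy hy0
      rw [hy trivial]
      exact hy0.symm
    simpa [hT'] using hn
  refine norm_le_zero_iff.1 (le_of_forall_pos_le_add fun ε hε => ?_)
  refine (hle (ε / (n + 1)) (by positivity)).trans ?_
  rw [zero_add, mul_div_assoc', div_le_iff₀ (by positivity)]
  nlinarith

/-- A set of finite width without rectangles of positive measure is null: up to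
the diagonals `{f = g}` over non-atoms, `{f ≤ g}` is a countable union of rectangles
`{f ≤ q} × {q ≤ g}`, with `q` rational or an atom of `f`. -/
theorem prod_eq_zero_of_no_rectangle [SFinite μ] [SFinite ν] {E : Set (X × Y)}
    (hE : FiniteWidth E)
    (h : ¬ ∃ (α : Set X) (β : Set Y), MeasurableSet α ∧ MeasurableSet β ∧
      α ×ˢ β ⊆ E ∧ 0 < μ α ∧ 0 < ν β) : μ.prod ν E = 0 := by
  obtain ⟨n, f, g, hf, hg, rfl⟩ := hE
  set Q : Fin n → Set ℝ := fun i => {t | 0 < μ {x | f i x = t}} ∪ Set.range ((↑) : ℚ → ℝ)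
  have hQc : ∀ i, (Q i).Countable := fun i =>
    (Measure.countable_meas_level_set_pos (hf i)).union (Set.countable_range _)
  have hN : ∀ i, ∀ᵐ p ∂μ.prod ν, f i p.1 = g i p.2 → g i p.2 ∈ Q i := by
    intro i
    have hm : MeasurableSet {p : X × Y | ¬ (f i p.1 = g i p.2 → g i p.2 ∈ Q i)} := by
      have h1 := measurableSet_eq_fun ((hf i).comp measurable_fst) ((hg i).comp measurable_snd)
        (β := ℝ) (α := X × Y)
      have h2 : MeasurableSet {p : X × Y | g i p.2 ∈ Q i} :=
        ((hg i).comp measurable_snd) (hQc i).measurableSet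
      convert! h1.diff h2 using 1
      ext p
      simp
    rw [ae_iff, Measure.prod_apply_symm hm]
    refine lintegral_eq_zero_of_ae_eq_zero (.of_forall fun y => ?_)
    by_cases hy : g i y ∈ Q i
    · simp [hy]
    · have : μ {x | f i x = g i y} = 0 := by
        by_contra hcon
        exact hy (Or.inl (pos_iff_ne_zero.2 hcon))
      simpa [hy] using this
  have hrect : ∀ᵐ p ∂μ.prod ν, ∀ q : ∀ i, Q i, ¬ ∀ i, f i p.1 ≤ q i ∧ (q i : ℝ) ≤ g i p.2 := by
    have : ∀ i, Countable (Q i) := fun i => (hQc i).to_subtype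
    refine ae_all_iff.2 fun q => ?_
    have hα : MeasurableSet {x | ∀ i, f i x ≤ q i} := by
      rw [Set.ofPred_forall]
      exact MeasurableSet.iInter fun i => measurableSet_le (hf i) measurable_const
    have hβ : MeasurableSet {y | ∀ i, (q i : ℝ) ≤ g i y} := by
      rw [Set.ofPred_forall]
      exact MeasurableSet.iInter fun i => measurableSet_le measurable_const (hg i)
    have h0 : μ.prod ν ({x | ∀ i, f i x ≤ q i} ×ˢ {y | ∀ i, (q i : ℝ) ≤ g i y}) = 0 := by
      rw [Measure.prod_prod]
      by_contra hcon
      rw [mul_eq_zero, not_or] at hcon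
      exact h ⟨_, _, hα, hβ, fun p hp i => (hp.1 i).trans (hp.2 i),
        pos_iff_ne_zero.2 hcon.1, pos_iff_ne_zero.2 hcon.2⟩
    rw [ae_iff]
    refine measure_mono_null (fun p hp => ?_) h0
    have hp' := not_not.1 hp
    exact ⟨fun i => (hp' i).1, fun i => (hp' i).2⟩
  have hall : ∀ᵐ p ∂μ.prod ν, ¬ ∀ i, f i p.1 ≤ g i p.2 := by
    filter_upwards [ae_all_iff.2 hN, hrect] with p h1 h2 h3
    have : ∀ i, ∃ q : Q i, f i p.1 ≤ q ∧ (q : ℝ) ≤ g i p.2 := by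
      intro i
      rcases (h3 i).lt_or_eq with hlt | heq
      · obtain ⟨q, hq⟩ := exists_rat_btwn hlt
        exact ⟨⟨q, Or.inr ⟨q, rfl⟩⟩, hq.1.le, hq.2.le⟩
      · exact ⟨⟨_, h1 i heq⟩, heq.le, le_rfl⟩
    choose q hq using this
    exact h2 q hq
  simpa [ae_iff] using hall

/-- If a kernel operator has zero compression `P(β) T P(α)`, its kernel vanishes on `β × α`:
almost every row of the kernel is orthogonal to a dense sequence in `L²(α)`. -/
theorem kernel_ae_eq_zero [SigmaFinite μ] [SigmaFinite ν] [MeasurableSpace.CountablyGenerated X]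
    {k : Lp ℂ 2 (ν.prod μ)} {T : Lp ℂ 2 μ →L[ℂ] Lp ℂ 2 ν}
    (hk : ∀ f : Lp ℂ 2 μ, (⇑(T f) : Y → ℂ) =ᵐ[ν] fun y => ∫ x, k (y, x) * f x ∂μ)
    {α : Set X} {β : Set Y} (hα : MeasurableSet α)
    (h : ∀ f : Lp ℂ 2 μ, (∀ᵐ x ∂μ, x ∉ α → f x = 0) → ∀ᵐ y ∂ν, y ∈ β → T f y = 0) :
    ∀ᵐ y ∂ν, ∀ᵐ x ∂μ, y ∈ β → x ∈ α → k (y, x) = 0 := by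
  have hkm : StronglyMeasurable k := Lp.stronglyMeasurable k
  have hsec : ∀ᵐ y ∂ν, MemLp (fun x => k (y, x)) 2 μ := by
    have h1 : ∫⁻ z, ‖k z‖ₑ ^ 2 ∂ν.prod μ ≠ ⊤ := by
      have := enorm_proj_sq MeasurableSet.univ k
      rw [Measure.restrict_univ] at this
      rw [← this]
      exact ENNReal.pow_ne_top enorm_ne_top
    rw [lintegral_prod _ (hkm.measurable.enorm.pow_const 2).aemeasurable] at h1
    have h2 := ae_lt_top (hkm.measurable.enorm.pow_const 2).lintegral_prod_right' h1
    filter_upwards [h2] with y hy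
    have hm : StronglyMeasurable fun x => k (y, x) := hkm.comp_measurable measurable_prodMk_left
    refine ⟨hm.aestronglyMeasurable, ?_⟩
    have h3 := eLpNorm_nnreal_pow_eq_lintegral (μ := μ) (f := fun x => k (y, x)) (p := 2)
      (by norm_num)
    have h4 : eLpNorm (fun x => k (y, x)) 2 μ ^ 2 < ⊤ := by
      calc _ = ∫⁻ x, ‖k (y, x)‖ₑ ^ 2 ∂μ := by simpa using h3
        _ < ⊤ := hy
    simpa using h4
  have : Fact ((2 : ENNReal) ≠ ⊤) := ⟨ENNReal.ofNat_ne_top⟩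
  have hseq : ∀ᵐ y ∂ν, ∀ m : ℕ, y ∈ β →
      ∫ x, k (y, x) * proj μ hα (TopologicalSpace.denseSeq (Lp ℂ 2 μ) m) x ∂μ = 0 := by
    refine ae_all_iff.2 fun m => ?_
    set u := proj μ hα (TopologicalSpace.denseSeq (Lp ℂ 2 μ) m)
    have hu : ∀ᵐ x ∂μ, x ∉ α → u x = 0 := by
      filter_upwards [proj_coeFn hα (TopologicalSpace.denseSeq (Lp ℂ 2 μ) m)] with x hx hxα
      rw [hx, Set.indicator_of_notMem hxα]
    filter_upwards [hk u, h u hu] with y h1 h2 hy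
    rw [← h1, h2 hy]
  filter_upwards [hsec, hseq] with y hy1 hy2
  by_cases hy : y ∈ β
  swap
  · exact .of_forall fun x h => absurd h hy
  -- the conjugated row, cut off to `α`
  set r : Lp ℂ 2 μ := proj μ hα (hy1.star.toLp)
  have hr : (r : X → ℂ) =ᵐ[μ] α.indicator fun x => star (k (y, x)) := by
    filter_upwards [proj_coeFn hα (hy1.star.toLp), hy1.star.coeFn_toLp] with x h1 h2
    rw [h1]
    by_cases hx : x ∈ α
    · rw [Set.indicator_of_mem hx, Set.indicator_of_mem hx, h2]; rfl
    · rw [Set.indicator_of_notMem hx, Set.indicator_of_notMem hx]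
  have hr0 : r = 0 := by
    refine (TopologicalSpace.denseRange_denseSeq (Lp ℂ 2 μ)).eq_zero_of_inner_left ℂ fun m => ?_
    rw [L2.inner_def, ← hy2 m hy]
    refine integral_congr_ae ?_
    filter_upwards [hr, proj_coeFn hα (TopologicalSpace.denseSeq (Lp ℂ 2 μ) m)] with x h1 h2
    rw [h1, h2]
    by_cases hx : x ∈ α
    · simp [hx, mul_comm]
    · simp [hx]
  rw [hr0] at hr
  filter_upwards [hr, Lp.coeFn_zero ℂ 2 μ] with x h1 h2 _ hx
  rw [h2, Set.indicator_of_mem hx] at h1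
  simpa using h1.symm

/-- A kernel operator supported on a null set of finite width has zero kernel. -/
theorem kernel_eq_zero [SigmaFinite μ] [SigmaFinite ν] [MeasurableSpace.CountablyGenerated X]
    {E : Set (X × Y)} (hE : FiniteWidth E) (h0 : μ.prod ν E = 0)
    {k : Lp ℂ 2 (ν.prod μ)} {T : Lp ℂ 2 μ →L[ℂ] Lp ℂ 2 ν}
    (hk : ∀ f : Lp ℂ 2 μ, (⇑(T f) : Y → ℂ) =ᵐ[ν] fun y => ∫ x, k (y, x) * f x ∂μ)
    (hTE : SupportedOn μ ν T E) : k = 0 := by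
  obtain ⟨n, f, g, hf, hg, rfl⟩ := hE
  have h1 : ∀ᵐ y ∂ν, ∀ᵐ x ∂μ, ¬ ∀ i, f i x ≤ g i y := by
    refine Measure.ae_ae_of_ae_prod (p := fun z : Y × X => ¬ ∀ i, f i z.2 ≤ g i z.1) ?_
    have h2 : ∀ᵐ p ∂(ν.prod μ).map Prod.swap, ¬ ∀ i, f i p.1 ≤ g i p.2 := by
      rw [Measure.prod_swap]
      simpa [ae_iff] using h0
    exact ae_of_ae_map measurable_swap.aemeasurable h2
  -- the complement of `E` is the union of the rectangles `{q < f i} × {g i < q}`, `q` rational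
  have h2 : ∀ᵐ y ∂ν, ∀ j : Fin n × ℚ, ∀ᵐ x ∂μ,
      y ∈ {y | g j.1 y < j.2} → x ∈ {x | (j.2 : ℝ) < f j.1 x} → k (y, x) = 0 := by
    refine ae_all_iff.2 fun j => ?_
    have hα : MeasurableSet {x | (j.2 : ℝ) < f j.1 x} := measurableSet_lt measurable_const (hf _)
    have hβ : MeasurableSet {y | g j.1 y < j.2} := measurableSet_lt (hg _) measurable_const
    refine kernel_ae_eq_zero hk hα (hTE _ _ hα hβ ⟨∅, ∅, .empty, .empty, by simp, by simp, ?_⟩)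
    rintro p ⟨⟨hp1, hp2⟩, hp⟩
    exact absurd (hp j.1) (not_le.2 (lt_trans hp2 hp1))
  have hkm : StronglyMeasurable k := Lp.stronglyMeasurable k
  refine Lp.ext (Filter.EventuallyEq.trans ?_ (Lp.coeFn_zero ℂ 2 _).symm)
  refine (Measure.ae_prod_iff_ae_ae (hkm.measurable (measurableSet_singleton 0))).2 ?_
  filter_upwards [h1, h2] with y h3 h4
  filter_upwards [h3, ae_all_iff.2 h4] with x h5 h6
  push Not at h5
  obtain ⟨i, hi⟩ := h5
  obtain ⟨q, hq⟩ := exists_rat_btwn hi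
  exact h6 (i, q) hq.1 hq.2

theorem indicatorConstLp_one_ne_zero {Z : Type*} [MeasurableSpace Z] {ρ : Measure Z} {A : Set Z}
    (hA : MeasurableSet A) (hAt : ρ A ≠ ⊤) (hA0 : ρ A ≠ 0) :
    indicatorConstLp 2 hA hAt (1 : ℂ) ≠ 0 := by
  rw [← norm_ne_zero_iff, norm_indicatorConstLp two_ne_zero ENNReal.ofNat_ne_top, norm_one, one_mul]
  exact (Real.rpow_pos_of_pos (ENNReal.toReal_pos hA0 hAt) _).ne'

/-- The rank one operator `f ↦ (∫_α f) 1_β` of a rectangle `α × β ⊆ E` of positive measure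
witnesses the failure of both operator-theoretic conditions. -/
theorem exists_rank_one [SigmaFinite μ] [SigmaFinite ν] {E : Set (X × Y)}
    (h : ∃ (α : Set X) (β : Set Y), MeasurableSet α ∧ MeasurableSet β ∧
      α ×ˢ β ⊆ E ∧ 0 < μ α ∧ 0 < ν β) :
    ∃ (k : Lp ℂ 2 (ν.prod μ)) (T : Lp ℂ 2 μ →L[ℂ] Lp ℂ 2 ν),
      k ≠ 0 ∧ T ≠ 0 ∧ IsCompactOperator T ∧
      (∀ f : Lp ℂ 2 μ, (⇑(T f) : Y → ℂ) =ᵐ[ν] fun y => ∫ x, k (y, x) * f x ∂μ) ∧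
      SupportedOn μ ν T E := by
  obtain ⟨α₀, β₀, hα₀, hβ₀, hsub₀, hμ₀, hν₀⟩ := h
  obtain ⟨α, hα, hαs, hμ, hμt⟩ := Measure.exists_subset_measure_lt_top hα₀ hμ₀
  obtain ⟨β, hβ, hβs, hν, hνt⟩ := Measure.exists_subset_measure_lt_top hβ₀ hν₀
  have hsub : α ×ˢ β ⊆ E := (Set.prod_mono hαs hβs).trans hsub₀
  have hpt : (ν.prod μ) (β ×ˢ α) ≠ ⊤ := by
    rw [Measure.prod_prod]
    exact ENNReal.mul_ne_top hνt.ne hμt.ne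
  set u : Lp ℂ 2 μ := indicatorConstLp 2 hα hμt.ne 1
  set v : Lp ℂ 2 ν := indicatorConstLp 2 hβ hνt.ne 1
  set k : Lp ℂ 2 (ν.prod μ) := indicatorConstLp 2 (hβ.prod hα) hpt 1
  set T : Lp ℂ 2 μ →L[ℂ] Lp ℂ 2 ν := (innerSL ℂ u).smulRight v
  have hT : ∀ f, T f = (∫ x in α, f x ∂μ) • v := fun f => by
    rw [← L2.inner_indicatorConstLp_one hα hμt.ne f]; rfl
  have hTv : ∀ f : Lp ℂ 2 μ, ∀ᵐ y ∂ν, T f y = (∫ x in α, f x ∂μ) * β.indicator (fun _ => 1) y := by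
    intro f
    rw [hT]
    filter_upwards [Lp.coeFn_smul (∫ x in α, f x ∂μ) v,
      indicatorConstLp_coeFn (p := 2) (hs := hβ) (hμs := hνt.ne) (c := (1 : ℂ))] with y h1 h2
    rw [h1, Pi.smul_apply, h2, smul_eq_mul]
  have hv0 : v ≠ 0 := indicatorConstLp_one_ne_zero hβ hνt.ne hν.ne'
  have hu0 : u ≠ 0 := indicatorConstLp_one_ne_zero hα hμt.ne hμ.ne'
  have hk0 : k ≠ 0 := indicatorConstLp_one_ne_zero (hβ.prod hα) hpt <| by
    rw [Measure.prod_prod]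
    exact mul_ne_zero hν.ne' hμ.ne'
  refine ⟨k, T, hk0, fun h => ?_, ?_, fun f => ?_, ?_⟩
  · have h1 : T u = (inner ℂ u u : ℂ) • v := rfl
    rw [h] at h1
    have h2 := (smul_eq_zero.1 h1.symm).resolve_right hv0
    exact hu0 (inner_self_eq_zero.1 h2)
  · have h1 : IsCompactOperator (innerSL ℂ u : Lp ℂ 2 μ →L[ℂ] ℂ) :=
      isCompactOperator_of_locallyCompactSpace_dom _
    exact h1.clm_comp ((1 : ℂ →L[ℂ] ℂ).smulRight v)
  · have hk1 := Measure.ae_ae_of_ae_prod (indicatorConstLp_coeFn (μ := ν.prod μ) (p := 2)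
      (hs := hβ.prod hα) (hμs := hpt) (c := (1 : ℂ)))
    filter_upwards [hTv f, hk1] with y h1 h2
    have h3 : ∀ᵐ x ∂μ, k (y, x) * f x =
        β.indicator (fun _ => (1 : ℂ)) y * α.indicator f x := by
      filter_upwards [h2] with x hx
      rw [hx]
      by_cases h4 : y ∈ β <;> by_cases h5 : x ∈ α <;> simp [h4, h5]
    rw [h1, integral_congr_ae h3, integral_const_mul, integral_indicator hα, mul_comm]
  · rintro α' β' hα' hβ' ⟨X₀, Y₀, -, -, hX₀, hY₀, hM⟩ f hf
    by_cases hcase : α' ∩ α ⊆ X₀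
    · have h0 : ∫ x in α, f x ∂μ = 0 := by
        refine integral_eq_zero_of_ae ((ae_restrict_iff' hα).2 ?_)
        filter_upwards [hf, measure_eq_zero_iff_ae_notMem.1 hX₀] with x h1 h2 h3
        exact h1 fun h4 => h2 (hcase ⟨h4, h3⟩)
      filter_upwards [hTv f] with y hy _
      rw [hy, h0, zero_mul]
    · obtain ⟨x, ⟨hx', hx⟩, hx0⟩ := Set.not_subset.1 hcase
      filter_upwards [hTv f, measure_eq_zero_iff_ae_notMem.1 hY₀] with y h1 h2 hy
      have h3 : y ∉ β := fun h3 =>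
        (hM ⟨⟨hx', hy⟩, hsub ⟨hx, h3⟩⟩ : (x, y) ∈ _).elim (fun h => hx0 h.1) (fun h => h2 h.2)
      rw [h1, Set.indicator_of_notMem h3, mul_zero]

end Main

/-- For a set `E` of finite width the following are equivalent:
(i) no nonzero compact operator is supported on `E`; (ii) no nonzero Hilbert–Schmidt
(integral, with `L²` kernel) operator is supported on `E`; (iii) `(μ × ν)(E) = 0`;
(iv) `E` contains no measurable rectangle of positive measure. -/
theorem stmt_4
    {X Y : Type*} [MeasurableSpace X] [StandardBorelSpace X]
    [MeasurableSpace Y] [StandardBorelSpace Y]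
    (μ : Measure X) (ν : Measure Y) [SigmaFinite μ] [SigmaFinite ν]
    (E : Set (X × Y)) (hE : FiniteWidth E) :
    List.TFAE
      [¬ ∃ T : Lp ℂ 2 μ →L[ℂ] Lp ℂ 2 ν,
          T ≠ 0 ∧ IsCompactOperator ⇑T ∧ SupportedOn μ ν T E,
       ¬ ∃ (k : Lp ℂ 2 (ν.prod μ)) (T : Lp ℂ 2 μ →L[ℂ] Lp ℂ 2 ν),
          k ≠ 0 ∧
          (∀ f : Lp ℂ 2 μ, (⇑(T f) : Y → ℂ) =ᵐ[ν] fun y => ∫ x, k (y, x) * f x ∂μ) ∧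
          SupportedOn μ ν T E,
       (μ.prod ν) E = 0,
       ¬ ∃ (α : Set X) (β : Set Y), MeasurableSet α ∧ MeasurableSet β ∧
          α ×ˢ β ⊆ E ∧ 0 < μ α ∧ 0 < ν β] := by
  tfae_have 3 → 1 := fun h0 ⟨T, hT0, hT, hTE⟩ => hT0 (eq_zero_of_isCompactOperator hE h0 hT hTE)
  tfae_have 3 → 2 := fun h0 ⟨k, T, hk0, hk, hTE⟩ => hk0 (kernel_eq_zero hE h0 hk hTE)
  tfae_have 4 → 3 := prod_eq_zero_of_no_rectangle hE
  tfae_have 1 → 4 := fun h hr => by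
    obtain ⟨k, T, -, hT0, hT, -, hTE⟩ := exists_rank_one hr
    exact h ⟨T, hT0, hT, hTE⟩
  tfae_have 2 → 4 := fun h hr => by
    obtain ⟨k, T, hk0, -, -, hk, hTE⟩ := exists_rank_one hr
    exact h ⟨k, T, hk0, hk, hTE⟩
  tfae_finish
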